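/- arXiv:math/0108177 — 2 statements merged into one kernel-verified Lean document; each statement's English description precedes it below -/
import Mathlib

section
/- Any two distinct extreme rays of HYP_7 that are spanned by nonzero cut semimetrics are adjacent; that is, the restriction of the skeleton graph of HYP_7 to the 63 cut rays is a complete graph. -/
/-!
Every hypermetric is a semimetric: the inequality for `b = e_i + e_j - e_k` is the triangle
inequality `d_ij ≤ d_ik + d_kj` (`HYP_subset_MET`). It is therefore enough to find a face of
`HYP_n`, cut out by triangle inequalities alone, that contains both cuts `δ_S`, `δ_T` and lies in
their linear span.

Take the triangle inequalities that are tight at both `δ_S` and `δ_T`; these are the triples for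
which `k` lies on the common side of `i` and `j` whenever `S` (or `T`) fails to separate `i` from
`j`. Their sum defines a face. On this face two points separated by neither cut have distance `0`,
so `d` lives on the at most four blocks cut out by `S` and `T`. As the cuts are nonzero and distinct,
at least three blocks are nonempty, and there are points `p, q, r` such that only `S` separates
`p, q` and only `T` separates `p, r` (`exists_corner`). The tight equalities then force
`d = d_pq δ_S + d_pr δ_T` (`eq_of_tight`). The pairs `pq` and `pr` also witness linear independence of
the two cuts, so the minimal face has dimension exactly two. The argument works for every `n`.
-/

open scoped BigOperators

noncomputable section

/-- Index set for pairs `1 ≤ i < j ≤ n`. -/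
abbrev PairIdx (n : ℕ) : Type := {p : Fin n × Fin n // p.1 < p.2}

/-- The hypermetric (left-hand side) sum `∑_{i<j} b_i b_j d_{ij}`. -/
def hypSum {n : ℕ} (b : Fin n → ℤ) (d : PairIdx n → ℝ) : ℝ :=
  ∑ p : PairIdx n, ((b p.1.1 : ℝ) * (b p.1.2 : ℝ)) * d p

/-- The hypermetric cone `HYP_n`. -/
def HYP (n : ℕ) : Set (PairIdx n → ℝ) :=
  {d | ∀ b : Fin n → ℤ, (∑ i, b i) = 1 → hypSum b d ≤ 0}

/-- The value `d_{ij}` extended symmetrically (junk value `0` on the diagonal). -/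
def dval {n : ℕ} (d : PairIdx n → ℝ) (i j : Fin n) : ℝ :=
  if h : i < j then d ⟨(i, j), h⟩ else if h' : j < i then d ⟨(j, i), h'⟩ else 0

/-- The semimetric cone `MET_n`. -/
def MET (n : ℕ) : Set (PairIdx n → ℝ) :=
  {d | ∀ i j k : Fin n, i ≠ j → j ≠ k → i ≠ k → dval d i j ≤ dval d i k + dval d k j}

/-- The cut semimetric `δ_S`. -/
def cutVec {n : ℕ} (S : Finset (Fin n)) : PairIdx n → ℝ :=
  fun p => if (p.1.1 ∈ S ∧ p.1.2 ∉ S) ∨ (p.1.1 ∉ S ∧ p.1.2 ∈ S) then 1 else 0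

/-- The cut cone `CUT_n`: nonnegative linear combinations of cut semimetrics. -/
def CUT (n : ℕ) : Set (PairIdx n → ℝ) :=
  {d | ∃ c : Finset (Fin n) → ℝ, (∀ S, 0 ≤ c S) ∧ d = ∑ S : Finset (Fin n), c S • cutVec S}

/-- `R` is a ray of the convex cone `C`. -/
def IsRayOf {V : Type*} [AddCommGroup V] [Module ℝ V] (C R : Set V) : Prop :=
  ∃ d ∈ C, d ≠ 0 ∧ R = {x | ∃ t : ℝ, 0 ≤ t ∧ x = t • d}

/-- `R` is an extreme ray of the convex cone `C`. -/
def IsExtremeRayOf {V : Type*} [AddCommGroup V] [Module ℝ V] (C R : Set V) : Prop :=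
  IsRayOf C R ∧ ∀ x ∈ C, ∀ y ∈ C, x + y ∈ R → x ∈ R ∧ y ∈ R

/-- `R` is an extreme ray spanned by a nonzero cut semimetric. -/
def IsCutRay {n : ℕ} (R : Set (PairIdx n → ℝ)) : Prop :=
  ∃ S : Finset (Fin n), cutVec S ≠ 0 ∧ R = {x | ∃ t : ℝ, 0 ≤ t ∧ x = t • cutVec S}

/-- The (linear) dimension of the set `A`. -/
def coneDim {V : Type*} [AddCommGroup V] [Module ℝ V] (A : Set V) : ℕ :=
  Module.finrank ℝ ↥(Submodule.span ℝ A)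

/-- `F` is the face of `C` induced by some valid linear inequality. -/
def IsFaceOf {V : Type*} [AddCommGroup V] [Module ℝ V] (C F : Set V) : Prop :=
  ∃ f : V →ₗ[ℝ] ℝ, (∀ x ∈ C, 0 ≤ f x) ∧ F = {x ∈ C | f x = 0}

/-- `F` is a facet of `C`: a face of dimension `dim C - 1`. -/
def IsFacetOf {V : Type*} [AddCommGroup V] [Module ℝ V] (C F : Set V) : Prop :=
  IsFaceOf C F ∧ coneDim F + 1 = coneDim C

/-- The minimal face of `C` containing `A`. -/
def minFace {V : Type*} [AddCommGroup V] [Module ℝ V] (C A : Set V) : Set V :=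
  ⋂₀ {F | IsFaceOf C F ∧ A ⊆ F}

/-- Two extreme rays are adjacent when the minimal face containing both is 2-dimensional. -/
def RaysAdjacent {V : Type*} [AddCommGroup V] [Module ℝ V] (C R₁ R₂ : Set V) : Prop :=
  coneDim (minFace C (R₁ ∪ R₂)) = 2

/-- Two facets are adjacent when their intersection has dimension `dim C - 2`. -/
def FacetsAdjacent {V : Type*} [AddCommGroup V] [Module ℝ V] (C F₁ F₂ : Set V) : Prop :=
  coneDim (F₁ ∩ F₂) + 2 = coneDim C

/-- Action of a permutation on the index pairs. -/
def permPair {n : ℕ} (σ : Equiv.Perm (Fin n)) (p : PairIdx n) : PairIdx n :=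
  if h : σ p.1.1 < σ p.1.2 then ⟨(σ p.1.1, σ p.1.2), h⟩
  else ⟨(σ p.1.2, σ p.1.1),
    lt_of_le_of_ne (not_lt.mp h) (fun he => (ne_of_lt p.2) (σ.injective he).symm)⟩

/-- Action of `Sym(n)` on `ℝ^{n(n-1)/2}`: `(σ·d)_{ij} = d_{σ(i)σ(j)}`. -/
def permAct {n : ℕ} (σ : Equiv.Perm (Fin n)) (d : PairIdx n → ℝ) : PairIdx n → ℝ :=
  fun p => d (permPair σ p)

/-- The orbit of a subset of `ℝ^{n(n-1)/2}` under the action of `Sym(n)`. -/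
def setOrbit {n : ℕ} (A : Set (PairIdx n → ℝ)) : Set (Set (PairIdx n → ℝ)) :=
  {A' | ∃ σ : Equiv.Perm (Fin n), A' = permAct σ '' A}

theorem dval_comm {n : ℕ} (d : PairIdx n → ℝ) (i j : Fin n) : dval d i j = dval d j i := by
  unfold dval
  rcases lt_trichotomy i j with h | h | h
  · simp [h, h.not_gt]
  · subst h; simp
  · simp [h, h.not_gt]

theorem dval_self {n : ℕ} (d : PairIdx n → ℝ) (i : Fin n) : dval d i i = 0 := by
  simp [dval]

theorem dval_pair {n : ℕ} (d : PairIdx n → ℝ) (p : PairIdx n) : dval d p.1.1 p.1.2 = d p := by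
  simp [dval, p.2]

/-- The coordinate `d_ij`, extended symmetrically, as a linear functional of `d`. -/
def dvalLin {n : ℕ} (i j : Fin n) : (PairIdx n → ℝ) →ₗ[ℝ] ℝ :=
  if h : i < j then LinearMap.proj ⟨(i, j), h⟩
  else if h' : j < i then LinearMap.proj ⟨(j, i), h'⟩ else 0

theorem dvalLin_apply {n : ℕ} (i j : Fin n) (d : PairIdx n → ℝ) :
    dvalLin i j d = dval d i j := by
  unfold dvalLin dval
  split_ifs <;> rfl

/-- The side of the cut `S` on which a point lies. -/
def side {n : ℕ} (S : Finset (Fin n)) (i : Fin n) : Bool := decide (i ∈ S)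

theorem dval_cutVec {n : ℕ} (S : Finset (Fin n)) (i j : Fin n) :
    dval (cutVec S) i j = if side S i = side S j then 0 else 1 := by
  unfold dval cutVec side
  rcases lt_trichotomy i j with h | h | h
  · by_cases hi : i ∈ S <;> by_cases hj : j ∈ S <;> simp [h, hi, hj]
  · subst h; simp
  · by_cases hi : i ∈ S <;> by_cases hj : j ∈ S <;> simp [h, h.not_gt, hi, hj]

/-- The hypermetric sum as half of a sum over all ordered pairs. -/
theorem two_mul_hypSum {n : ℕ} (b : Fin n → ℤ) (d : PairIdx n → ℝ) :
    2 * hypSum b d = ∑ i, ∑ j, (b i : ℝ) * (b j : ℝ) * dval d i j := by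
  have h1 : hypSum b d =
      ∑ i, ∑ j, if i < j then (b i : ℝ) * (b j : ℝ) * dval d i j else 0 := by
    rw [← Finset.sum_product', Finset.univ_product_univ, ← Finset.sum_filter]
    rw [Finset.sum_subtype (p := fun p : Fin n × Fin n => p.1 < p.2) _ (by simp)]
    unfold hypSum
    refine Finset.sum_congr rfl fun p _ => ?_
    rw [dval_pair]
  have h2 : hypSum b d =
      ∑ i, ∑ j, if j < i then (b i : ℝ) * (b j : ℝ) * dval d i j else 0 := by
    rw [h1, Finset.sum_comm]
    refine Finset.sum_congr rfl fun i _ => Finset.sum_congr rfl fun j _ => ?_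
    rw [dval_comm d j i, mul_comm (b j : ℝ)]
  rw [two_mul]
  nth_rewrite 1 [h1]
  rw [h2, ← Finset.sum_add_distrib]
  refine Finset.sum_congr rfl fun i _ => ?_
  rw [← Finset.sum_add_distrib]
  refine Finset.sum_congr rfl fun j _ => ?_
  rcases lt_trichotomy i j with h | h | h
  · simp [h, h.not_gt]
  · subst h; simp [dval_self]
  · simp [h, h.not_gt]

theorem HYP_subset_MET (n : ℕ) : HYP n ⊆ MET n := by
  intro d hd i j k hij hjk hik
  let b : Fin n → ℤ := Pi.single i 1 + Pi.single j 1 - Pi.single k 1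
  have hb : ∑ l, b l = 1 := by
    simp [b, Finset.sum_add_distrib, Finset.sum_sub_distrib]
  have h := hd b hb
  have hreal : ∀ l, (b l : ℝ) =
      (if l = i then 1 else 0) + (if l = j then 1 else 0) - (if l = k then 1 else 0) := by
    intro l
    simp [b, Pi.single_apply]
  have hlin : ∀ g : Fin n → ℝ, ∑ l, (b l : ℝ) * g l = g i + g j - g k := by
    intro g
    simp only [hreal, sub_mul, add_mul, Finset.sum_sub_distrib, Finset.sum_add_distrib, ite_mul,
      one_mul, zero_mul, Finset.sum_ite_eq', Finset.mem_univ, if_true]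
  have h2 := two_mul_hypSum b d
  simp only [mul_assoc, ← Finset.mul_sum, hlin] at h2
  simp only [dval_self, dval_comm d j i, dval_comm d k i, dval_comm d k j] at h2
  rw [dval_comm d k j]
  linarith

/-- `k` lies between `i` and `j` with respect to a cut `s`: the triangle inequality
`d_ij ≤ d_ik + d_kj` is tight at that cut. -/
def Between {n : ℕ} (s : Fin n → Bool) (i j k : Fin n) : Prop := s i = s j → s k = s i

theorem dval_cutVec_of_between {n : ℕ} {S : Finset (Fin n)} {i j k : Fin n}
    (h : Between (side S) i j k) :
    dval (cutVec S) i k + dval (cutVec S) k j - dval (cutVec S) i j = 0 := by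
  simp only [dval_cutVec]
  unfold Between at h
  cases hi : side S i <;> cases hj : side S j <;> cases hk : side S k <;> simp_all

/-- Two nontrivial cuts which separate different pairs have a block adjacent to two other
nonempty blocks. -/
theorem exists_corner {n : ℕ} (s t : Fin n → Bool) (hs : ∃ i j, s i ≠ s j) (ht : ∃ i j, t i ≠ t j)
    (hst : ∃ i j, ¬ (s i = s j ↔ t i = t j)) :
    ∃ p q r, s p ≠ s q ∧ t p = t q ∧ s p = s r ∧ t p ≠ t r := by
  have other : ∀ u : Fin n → Bool, (∃ i j, u i ≠ u j) → ∀ i, ∃ k, u k ≠ u i := by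
    rintro u ⟨a, b, hab⟩ i
    by_cases h : u a = u i
    · exact ⟨b, fun h' => hab (h.trans h'.symm)⟩
    · exact ⟨a, h⟩
  obtain ⟨i, j, hij⟩ := hst
  by_cases h : s i = s j
  · have h' : t i ≠ t j := fun e => hij ⟨fun _ => e, fun _ => h⟩
    obtain ⟨k, hk⟩ := other s hs i
    by_cases hti : t k = t i
    · exact ⟨i, k, j, hk.symm, hti.symm, h, h'⟩
    · refine ⟨j, k, i, by rw [← h]; exact hk.symm, ?_, h.symm, h'.symm⟩
      cases hi : t i <;> cases hj : t j <;> cases hk : t k <;> simp_all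
  · have h' : t i = t j := by
      by_contra e
      exact hij ⟨fun a => absurd a h, fun a => absurd a e⟩
    obtain ⟨k, hk⟩ := other t ht i
    by_cases hsi : s k = s i
    · exact ⟨i, j, k, h, h', hsi.symm, hk.symm⟩
    · refine ⟨j, i, k, fun e => h e.symm, h'.symm, ?_, by rw [← h']; exact hk.symm⟩
      cases hi : s i <;> cases hj : s j <;> cases hk : s k <;> simp_all

/-- A symmetric function satisfying all triangle equalities which are tight at the cuts `s` and `t`
is a combination of these cuts. -/
theorem eq_of_tight {n : ℕ} (s t : Fin n → Bool) (D : Fin n → Fin n → ℝ)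
    (hself : ∀ i, D i i = 0) (hcomm : ∀ i j, D i j = D j i)
    (hD : ∀ i j k, i ≠ j → j ≠ k → i ≠ k → Between s i j k → Between t i j k →
      D i k + D k j = D i j)
    {p q r : Fin n} (hs : s p ≠ s q) (ht : t p = t q) (hs' : s p = s r) (ht' : t p ≠ t r)
    (x y : Fin n) :
    D x y = D p q * (if s x = s y then 0 else 1) + D p r * (if t x = t y then 0 else 1) := by
  -- Points in a common block are at distance zero; the third point is taken across the cut `s`.
  have hzero : ∀ i j, s i = s j → t i = t j → D i j = 0 := by
    intro i j h1 h2
    by_cases hij : i = j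
    · rw [hij, hself]
    obtain ⟨k, hk⟩ : ∃ k, s k ≠ s i := by
      by_cases h : s p = s i
      · exact ⟨q, fun e => hs (h.trans e.symm)⟩
      · exact ⟨p, h⟩
    have hki : k ≠ i := fun e => hk (by rw [e])
    have hkj : k ≠ j := fun e => hk (by rw [e, h1])
    have e1 := hD k i j hki hij hkj (fun e => absurd e hk) (fun e => by rw [e, h2])
    have e2 := hD k j i hkj (Ne.symm hij) hki (fun e => absurd (e.trans h1.symm) hk)
      (fun e => by rw [e, h2])
    have := hcomm i j
    linarith
  -- Hence the tight equalities also hold for degenerate triples.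
  have hD' : ∀ i j k, Between s i j k → Between t i j k → D i k + D k j = D i j := by
    intro i j k h1 h2
    by_cases hik : i = k
    · subst hik; simp [hself]
    by_cases hjk : j = k
    · subst hjk; simp [hself]
    by_cases hij : i = j
    · subst hij
      have := hzero i k (h1 rfl).symm (h2 rfl).symm
      rw [hcomm k i, this, hself]; simp
    · exact hD i j k hij hjk hik h1 h2
  -- All distances from the three corner points `p, q, r` are as claimed, block by block.
  unfold Between at hD'
  have key : ∀ z,
      D p z = D p q * (if s p = s z then 0 else 1) + D p r * (if t p = t z then 0 else 1) ∧
      D q z = D p q * (if s q = s z then 0 else 1) + D p r * (if t q = t z then 0 else 1) ∧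
      D r z = D p q * (if s r = s z then 0 else 1) + D p r * (if t r = t z then 0 else 1) := by
    intro z
    have c1 := hcomm p q
    have c2 := hcomm p r
    have c3 := hcomm q r
    have c4 := hcomm q z
    have c5 := hcomm r z
    have c6 := hcomm p z
    have a1 := hD' q r p
    have a2 := hD' q r z
    have a3 := hD' p z q
    have a4 := hD' p z r
    have a5 := hD' q z p
    have a6 := hD' r z p
    have a7 := hD' q z r
    have a8 := hD' r z q
    have z1 := hzero p z
    have z2 := hzero q z
    have z3 := hzero r z
    have b1 := hD' p q z
    have b2 := hD' p r z
    clear hD' hzero hD hself hcomm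
    generalize s p = sp, s q = sq, s r = sr, s z = sz at *
    generalize t p = tp, t q = tq, t r = tr, t z = tz at *
    cases sp <;> cases sq <;> cases sr <;> cases tp <;> cases tq <;> cases tr <;>
      simp at hs ht hs' ht' <;> cases sz <;> cases tz <;> simp at * <;>
      refine ⟨?_, ?_, ?_⟩ <;> linarith
  have kx := key x
  have ky := key y
  have c1 := hcomm p x
  have c2 := hcomm q x
  have c3 := hcomm r x
  have z0 := hzero x y
  have a1 := hD' x y p
  have a2 := hD' x y q
  have a3 := hD' x y r
  have b1 := hD' p y x
  have b2 := hD' q y x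
  have b3 := hD' r y x
  clear hD' hzero hD hself hcomm key
  generalize s p = sp, s q = sq, s r = sr, s x = sx, s y = sy at *
  generalize t p = tp, t q = tq, t r = tr, t x = tx, t y = ty at *
  cases sp <;> cases sq <;> cases sr <;> cases tp <;> cases tq <;> cases tr <;>
    simp at hs ht hs' ht' <;> cases sx <;> cases tx <;> cases sy <;> cases ty <;>
    simp at * <;> linarith

theorem exists_sep_of_cutVec_ne_zero {n : ℕ} {S : Finset (Fin n)} (h : cutVec S ≠ 0) :
    ∃ i j, side S i ≠ side S j := by
  by_contra! hc
  apply h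
  ext p
  rw [← dval_pair (cutVec S), dval_cutVec]
  simp [hc p.1.1 p.1.2]

theorem exists_sep_of_cutVec_ne {n : ℕ} {S T : Finset (Fin n)} (h : cutVec S ≠ cutVec T) :
    ∃ i j, ¬ (side S i = side S j ↔ side T i = side T j) := by
  by_contra! hc
  apply h
  ext p
  rw [← dval_pair (cutVec S), ← dval_pair (cutVec T), dval_cutVec, dval_cutVec]
  simp [hc p.1.1 p.1.2]

theorem ray_subset_HYP {n : ℕ} {R : Set (PairIdx n → ℝ)} (h : IsRayOf (HYP n) R) : R ⊆ HYP n := by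
  obtain ⟨d, hd, -, rfl⟩ := h
  rintro x ⟨t, ht, rfl⟩ b hb
  have : hypSum b (t • d) = t * hypSum b d := by
    simp only [hypSum, Finset.mul_sum, Pi.smul_apply, smul_eq_mul]
    exact Finset.sum_congr rfl fun p _ => by ring
  rw [this]
  exact mul_nonpos_of_nonneg_of_nonpos ht (hd b hb)

open Classical in
/-- The sum of the defects `d_ik + d_kj - d_ij` over all triples of distinct points whose
triangle inequality is tight at both `S` and `T`. -/
def tightSum {n : ℕ} (S T : Finset (Fin n)) : (PairIdx n → ℝ) →ₗ[ℝ] ℝ :=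
  ∑ x : Fin n × Fin n × Fin n,
    if (x.1 ≠ x.2.1 ∧ x.2.1 ≠ x.2.2 ∧ x.1 ≠ x.2.2) ∧
        Between (side S) x.1 x.2.1 x.2.2 ∧ Between (side T) x.1 x.2.1 x.2.2
    then dvalLin x.1 x.2.2 + dvalLin x.2.2 x.2.1 - dvalLin x.1 x.2.1 else 0

theorem tightSum_term_nonneg {n : ℕ} {d : PairIdx n → ℝ} (hd : d ∈ HYP n) (P : Prop) [Decidable P]
    (i j k : Fin n) :
    0 ≤ (if (i ≠ j ∧ j ≠ k ∧ i ≠ k) ∧ P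
      then dvalLin i k + dvalLin k j - dvalLin i j else 0 : (PairIdx n → ℝ) →ₗ[ℝ] ℝ) d := by
  split_ifs with h
  · have := HYP_subset_MET n hd i j k h.1.1 h.1.2.1 h.1.2.2
    simp only [LinearMap.sub_apply, LinearMap.add_apply, dvalLin_apply]
    linarith
  · simp

theorem tightSum_nonneg {n : ℕ} (S T : Finset (Fin n)) {d : PairIdx n → ℝ} (hd : d ∈ HYP n) :
    0 ≤ tightSum S T d := by
  classical
  unfold tightSum
  rw [LinearMap.sum_apply]
  exact Finset.sum_nonneg fun x _ => tightSum_term_nonneg hd _ _ _ _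

theorem tightSum_cutVec {n : ℕ} (S T : Finset (Fin n)) :
    tightSum S T (cutVec S) = 0 ∧ tightSum S T (cutVec T) = 0 := by
  classical
  unfold tightSum
  simp only [LinearMap.sum_apply]
  constructor <;> refine Finset.sum_eq_zero fun x _ => ?_ <;> split_ifs with h
  · simpa [dvalLin_apply] using dval_cutVec_of_between h.2.1
  · simp
  · simpa [dvalLin_apply] using dval_cutVec_of_between h.2.2
  · simp

theorem tight_of_tightSum_eq_zero {n : ℕ} {S T : Finset (Fin n)} {d : PairIdx n → ℝ}
    (hd : d ∈ HYP n) (h : tightSum S T d = 0) (i j k : Fin n) (hij : i ≠ j) (hjk : j ≠ k)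
    (hik : i ≠ k) (hS : Between (side S) i j k) (hT : Between (side T) i j k) :
    dval d i k + dval d k j = dval d i j := by
  classical
  unfold tightSum at h
  rw [LinearMap.sum_apply,
    Finset.sum_eq_zero_iff_of_nonneg fun x _ => tightSum_term_nonneg hd _ _ _ _] at h
  have := h (i, j, k) (Finset.mem_univ _)
  rw [if_pos ⟨⟨hij, hjk, hik⟩, hS, hT⟩] at this
  simp only [LinearMap.sub_apply, LinearMap.add_apply, dvalLin_apply] at this
  linarith

/-- Distinct cut rays are adjacent in `HYP_n`, for every `n`. -/
theorem cut_rays_adjacent {n : ℕ} (R₁ R₂ : Set (PairIdx n → ℝ))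
    (hR₁ : IsRayOf (HYP n) R₁) (hC₁ : IsCutRay R₁) (hR₂ : IsRayOf (HYP n) R₂) (hC₂ : IsCutRay R₂)
    (hne : R₁ ≠ R₂) : RaysAdjacent (HYP n) R₁ R₂ := by
  have hsub₁ := ray_subset_HYP hR₁
  have hsub₂ := ray_subset_HYP hR₂
  obtain ⟨S, hS, hRS⟩ := hC₁
  obtain ⟨T, hT, hRT⟩ := hC₂
  have hST : cutVec S ≠ cutVec T := fun e => hne (by rw [hRS, hRT, e])
  obtain ⟨p, q, r, h1, h2, h3, h4⟩ := exists_corner (side S) (side T)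
    (exists_sep_of_cutVec_ne_zero hS) (exists_sep_of_cutVec_ne_zero hT)
    (exists_sep_of_cutVec_ne hST)
  have hSmem : cutVec S ∈ R₁ := by rw [hRS]; exact ⟨1, zero_le_one, (one_smul _ _).symm⟩
  have hTmem : cutVec T ∈ R₂ := by rw [hRT]; exact ⟨1, zero_le_one, (one_smul _ _).symm⟩
  have hspan : Submodule.span ℝ (minFace (HYP n) (R₁ ∪ R₂)) =
      Submodule.span ℝ (Set.range ![cutVec S, cutVec T]) := by
    have hrange : Set.range ![cutVec (n := n) S, cutVec T] = {cutVec S, cutVec T} := by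
      simp [Set.pair_comm]
    rw [hrange]
    apply le_antisymm
    · refine Submodule.span_le.2 fun d hd => ?_
      have hdF : d ∈ {x ∈ HYP n | tightSum S T x = 0} := by
        refine hd _ ⟨⟨tightSum S T, fun x hx => tightSum_nonneg S T hx, rfl⟩, ?_⟩
        rintro x (hx | hx)
        · refine ⟨hsub₁ hx, ?_⟩
          rw [hRS] at hx
          obtain ⟨t, -, rfl⟩ := hx
          simp [(tightSum_cutVec S T).1]
        · refine ⟨hsub₂ hx, ?_⟩
          rw [hRT] at hx
          obtain ⟨t, -, rfl⟩ := hx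
          simp [(tightSum_cutVec S T).2]
      rw [SetLike.mem_coe, Submodule.mem_span_pair]
      refine ⟨dval d p q, dval d p r, ?_⟩
      ext x
      have := eq_of_tight (side S) (side T) (dval d) (dval_self d) (dval_comm d)
        (tight_of_tightSum_eq_zero hdF.1 hdF.2) h1 h2 h3 h4 x.1.1 x.1.2
      rw [← dval_cutVec, ← dval_cutVec, dval_pair, dval_pair, dval_pair] at this
      simp [this]
    · apply Submodule.span_mono
      rintro x (rfl | rfl)
      · exact fun F hF => hF.2 (Or.inl hSmem)
      · exact fun F hF => hF.2 (Or.inr hTmem)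
  -- The pairs `pq` and `pr` are each separated by exactly one of the two cuts.
  have hli : LinearIndependent ℝ ![cutVec (n := n) S, cutVec T] := by
    rw [LinearIndependent.pair_iff]
    intro a b hab
    have e1 := congrArg (dvalLin p q) hab
    have e2 := congrArg (dvalLin p r) hab
    simp only [map_add, map_smul, map_zero, dvalLin_apply, dval_cutVec, smul_eq_mul] at e1 e2
    simp [h1, h2] at e1
    simp [h3, h4] at e2
    simp_all
  unfold RaysAdjacent coneDim
  rw [hspan, finrank_span_eq_card hli]
  simp

/-- any two distinct extreme rays of `HYP_7` spanned by nonzero cut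
semimetrics are adjacent in the skeleton of `HYP_7`. -/
theorem hyp7_cut_rays_pairwise_adjacent :
    ∀ R₁ R₂ : Set (PairIdx 7 → ℝ),
      IsExtremeRayOf (HYP 7) R₁ → IsCutRay R₁ →
      IsExtremeRayOf (HYP 7) R₂ → IsCutRay R₂ →
      R₁ ≠ R₂ → RaysAdjacent (HYP 7) R₁ R₂ :=
  fun R₁ R₂ h₁ hC₁ h₂ hC₂ hne => cut_rays_adjacent R₁ R₂ h₁.1 hC₁ h₂.1 hC₂ hne

end
end

section
/- Let E be a real inner product space, L ⊆ E an additive subgroup, c ∈ E and r ≥ 0 such that ‖v − c‖ ≥ r for all v ∈ L. Let v_1, …, v_n ∈ L satisfy ‖v_i − c‖ = r for all i, and define d_ij = ‖v_i − v_j‖² for 1 ≤ i < j ≤ n. Then d ∈ HYP_n, i.e., Σ_{1≤i<j≤n} b_i b_j d_ij ≤ 0 for every b ∈ ℤ^n with Σ_{i=1}^n b_i = 1. -/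
/-!
Put `u i = v i - c` and let `b` be integral with `∑ b i = 1`. As all `u i` have norm `r`,
expanding `‖u i - u j‖ ^ 2 = 2 * r ^ 2 - 2 * ⟪u i, u j⟫` gives
`∑ i, ∑ j, b i * b j * ‖u i - u j‖ ^ 2 = 2 * (r ^ 2 - ‖∑ i, b i • u i‖ ^ 2)`.
The left side is twice the hypermetric sum. On the right, `∑ b i • u i = (∑ b i • v i) - c`
because the `b i` sum to `1`, and `∑ b i • v i ∈ L` because they are integers, so the norm is at
least `r` and the right side is nonpositive.
-/

open scoped BigOperators

noncomputable section

/-- Symmetric families vanishing on the diagonal: the full double sum counts each pair twice. -/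
lemma two_mul_sum_pairIdx {n : ℕ} (f : Fin n → Fin n → ℝ) (hs : ∀ i j, f i j = f j i)
    (h0 : ∀ i, f i i = 0) :
    2 * ∑ p : PairIdx n, f p.1.1 p.1.2 = ∑ i, ∑ j, f i j := by
  have h1 : ∑ p : PairIdx n, f p.1.1 p.1.2 = ∑ i, ∑ j, if i < j then f i j else 0 := by
    rw [← Fintype.sum_prod_type' (fun i j : Fin n => if i < j then f i j else 0),
      ← Finset.sum_filter]
    exact (Finset.sum_subtype _ (by simp) (fun p : Fin n × Fin n => f p.1 p.2)).symm
  have h2 : ∑ i, ∑ j, (if i < j then f i j else 0) = ∑ i, ∑ j, if j < i then f i j else 0 := by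
    rw [Finset.sum_comm]
    simp only [hs]
  rw [two_mul, h1]
  nth_rewrite 2 [h2]
  simp only [← Finset.sum_add_distrib]
  refine Finset.sum_congr rfl fun i _ => Finset.sum_congr rfl fun j _ => ?_
  rcases lt_trichotomy i j with h | rfl | h
  · simp [h, h.not_gt]
  · simp [h0]
  · simp [h, h.not_gt]

lemma sum_sum_mul_norm_sub_sq {E : Type*} [NormedAddCommGroup E] [InnerProductSpace ℝ E]
    {n : ℕ} (a : Fin n → ℝ) (ha : ∑ i, a i = 1) (u : Fin n → E) (r : ℝ) (hu : ∀ i, ‖u i‖ = r) :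
    ∑ i, ∑ j, a i * a j * ‖u i - u j‖ ^ 2 = 2 * (r ^ 2 - ‖∑ i, a i • u i‖ ^ 2) := by
  have h1 : ‖∑ i, a i • u i‖ ^ 2 = ∑ i, ∑ j, a i * a j * inner ℝ (u i) (u j) := by
    rw [← real_inner_self_eq_norm_sq, sum_inner]
    simp only [inner_sum, real_inner_smul_left, real_inner_smul_right]
    exact Finset.sum_congr rfl fun i _ => Finset.sum_congr rfl fun j _ => by ring
  have h2 : ∑ i, ∑ j, a i * a j = 1 := by
    rw [← Finset.sum_mul_sum, ha, one_mul]
  have h3 : ∀ i j, a i * a j * ‖u i - u j‖ ^ 2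
      = 2 * r ^ 2 * (a i * a j) - 2 * (a i * a j * inner ℝ (u i) (u j)) := fun i j => by
    rw [norm_sub_sq_real, hu, hu]
    ring
  rw [h1]
  simp only [h3, Finset.sum_sub_distrib]
  simp_rw [← Finset.mul_sum (a := 2 * r ^ 2), ← Finset.mul_sum (a := (2 : ℝ))]
  rw [h2]
  ring

/-- if `c` is the center of a sphere of radius `r` containing no point of an
additive subgroup `L` in its interior, and `v₁, …, vₙ ∈ L` lie on this sphere, then
`d_{ij} = ‖vᵢ - vⱼ‖²` is a hypermetric, i.e. `d ∈ HYP_n`. -/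
theorem dist_sq_on_empty_sphere_mem_HYP {E : Type*} [NormedAddCommGroup E]
    [InnerProductSpace ℝ E] (L : AddSubgroup E) (c : E) (r : ℝ) (hr : 0 ≤ r)
    (hL : ∀ v ∈ L, r ≤ ‖v - c‖) (n : ℕ) (v : Fin n → E) (hvL : ∀ i, v i ∈ L)
    (hv : ∀ i, ‖v i - c‖ = r) :
    (fun p : PairIdx n => ‖v p.1.1 - v p.1.2‖ ^ 2) ∈ HYP n := by
  intro b hb
  have hb' : ∑ i, (b i : ℝ) = 1 := by exact_mod_cast hb
  have hw : ∑ i, (b i : ℝ) • (v i - c) = (∑ i, b i • v i) - c := by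
    simp only [smul_sub, Finset.sum_sub_distrib, Int.cast_smul_eq_zsmul, ← Finset.sum_smul, hb,
      one_smul]
  have hmem : ∑ i, b i • v i ∈ L := L.sum_mem fun i _ => L.zsmul_mem (hvL i) (b i)
  have hsq : r ^ 2 ≤ ‖(∑ i, b i • v i) - c‖ ^ 2 := pow_le_pow_left₀ hr (hL _ hmem) 2
  have key := sum_sum_mul_norm_sub_sq (fun i => (b i : ℝ)) hb' (fun i => v i - c) r hv
  simp only [sub_sub_sub_cancel_right] at key
  rw [hw] at key
  have hpair := two_mul_sum_pairIdx (fun i j => (b i : ℝ) * b j * ‖v i - v j‖ ^ 2)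
    (fun i j => by rw [norm_sub_rev, mul_comm (b i : ℝ)]) (fun i => by simp)
  unfold hypSum
  linarith

end
end
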